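/- Let A be a Noetherian commutative ring and I ⊆ A an ideal. If f : P → Q is a quasi-isomorphism between bounded-above cochain complexes of flat A-modules, then the induced map Λ_I P → Λ_I Q between the degreewise I-adic completions is again a quasi-isomorphism. -/

import Mathlib

open CategoryTheory

/-- The `I`-adic completion functor on the category of `A`-modules. Applied degreewise
(via `Functor.mapHomologicalComplex`) it computes the degreewise `I`-adic completion of a
cochain complex of `A`-modules. -/
noncomputable def adicCompletionFunctor (A : Type) [CommRing A] (I : Ideal A) :
    ModuleCat A ⥤ ModuleCat A where
  obj M := ModuleCat.of A (AdicCompletion I M)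
  map f := ModuleCat.ofHom ((AdicCompletion.map I f.hom).restrictScalars A)
  map_id M := ModuleCat.hom_ext
    (congrArg (LinearMap.restrictScalars A) (AdicCompletion.map_id I M))
  map_comp f g := ModuleCat.hom_ext
    (congrArg (LinearMap.restrictScalars A) (AdicCompletion.map_comp I f.hom g.hom).symm)

noncomputable instance (A : Type) [CommRing A] (I : Ideal A) :
    (adicCompletionFunctor A I).PreservesZeroMorphisms where
  map_zero M N := ModuleCat.hom_ext
    (congrArg (LinearMap.restrictScalars A) (AdicCompletion.map_zero I))

section helpers

open TensorProduct

variable {A : Type*} [CommRing A]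

theorem aux_ker_lTensor_inj {N P : Type*} [AddCommGroup N] [Module A N] [AddCommGroup P]
    [Module A P] (d : N →ₗ[A] P) [Module.Flat A (LinearMap.range d)]
    (B : Type*) [AddCommGroup B] [Module A B] :
    Function.Injective ((LinearMap.ker d).subtype.lTensor B) := by
  refine LinearMap.lTensor_injective_of_exact_of_flat d.rangeRestrict
    d.surjective_rangeRestrict _ (Submodule.injective_subtype _) ?_ B
  rw [LinearMap.exact_iff, LinearMap.ker_rangeRestrict, Submodule.range_subtype]

theorem aux_flat_ker {N P : Type*} [AddCommGroup N] [Module A N] [AddCommGroup P]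
    [Module A P] (d : N →ₗ[A] P) [Module.Flat A N] [Module.Flat A (LinearMap.range d)] :
    Module.Flat A (LinearMap.ker d) := by
  rw [Module.Flat.iff_rTensor_injective']
  intro J
  have h1 := aux_ker_lTensor_inj d J
  have h2 : Function.Injective (J.subtype.rTensor N) :=
    Module.Flat.rTensor_preserves_injective_linearMap _ (Submodule.injective_subtype _)
  have h3 := h2.comp h1
  rw [← LinearMap.coe_comp, LinearMap.rTensor_comp_lTensor, ← LinearMap.lTensor_comp_rTensor,
    LinearMap.coe_comp] at h3
  exact h3.of_comp

theorem aux_flat_prod (M N : Type*) [AddCommGroup M] [Module A M] [AddCommGroup N] [Module A N]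
    [Module.Flat A M] [Module.Flat A N] : Module.Flat A (M × N) := by
  rw [Module.Flat.iff_rTensor_injective']
  intro J
  rw [injective_iff_map_eq_zero]
  intro x hx
  have h1 : (LinearMap.fst A M N).lTensor J x = 0 := by
    have hi : Function.Injective (J.subtype.rTensor M) :=
      Module.Flat.rTensor_preserves_injective_linearMap _ (Submodule.injective_subtype _)
    apply hi
    rw [map_zero, ← LinearMap.comp_apply, LinearMap.rTensor_comp_lTensor,
      ← LinearMap.lTensor_comp_rTensor, LinearMap.comp_apply, hx, map_zero]
  have h2 : (LinearMap.snd A M N).lTensor J x = 0 := by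
    have hi : Function.Injective (J.subtype.rTensor N) :=
      Module.Flat.rTensor_preserves_injective_linearMap _ (Submodule.injective_subtype _)
    apply hi
    rw [map_zero, ← LinearMap.comp_apply, LinearMap.rTensor_comp_lTensor,
      ← LinearMap.lTensor_comp_rTensor, LinearMap.comp_apply, hx, map_zero]
  have h3 : (LinearMap.inl A M N ∘ₗ LinearMap.fst A M N +
      LinearMap.inr A M N ∘ₗ LinearMap.snd A M N).lTensor J x = x := by
    have : LinearMap.inl A M N ∘ₗ LinearMap.fst A M N +
      LinearMap.inr A M N ∘ₗ LinearMap.snd A M N = LinearMap.id := by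
      ext <;> simp
    rw [this, LinearMap.lTensor_id, LinearMap.id_apply]
  rw [← h3, LinearMap.lTensor_add, LinearMap.add_apply, LinearMap.lTensor_comp,
    LinearMap.lTensor_comp, LinearMap.comp_apply, LinearMap.comp_apply, h1, h2]
  simp

theorem aux_pure {N P : Type*} [AddCommGroup N] [Module A N] [AddCommGroup P]
    [Module A P] (d : N →ₗ[A] P) [Module.Flat A (LinearMap.range d)] (J : Ideal A)
    (n : LinearMap.ker d) (hn : (n : N) ∈ (J • ⊤ : Submodule A N)) :
    n ∈ (J • ⊤ : Submodule A (LinearMap.ker d)) := by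
  have h1 := aux_ker_lTensor_inj d (A ⧸ J)
  have key : ((1 : A ⧸ J) ⊗ₜ[A] n) = 0 := by
    apply h1
    rw [map_zero, LinearMap.lTensor_tmul]
    apply (quotTensorEquivQuotSMul N J).injective
    rw [quotTensorEquivQuotSMul_mk_one_tmul, map_zero]
    simpa using hn
  have := congrArg (quotTensorEquivQuotSMul (LinearMap.ker d) J) key
  rw [quotTensorEquivQuotSMul_mk_one_tmul, map_zero] at this
  simpa using this

theorem aux_exact {L M N P : Type*} [AddCommGroup L] [Module A L] [AddCommGroup M] [Module A M]
    [AddCommGroup N] [Module A N] [AddCommGroup P] [Module A P] (I : Ideal A)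
    (d₁ : L →ₗ[A] M) (d₂ : M →ₗ[A] N) (d₃ : N →ₗ[A] P)
    (h₁ : LinearMap.range d₁ = LinearMap.ker d₂) (h₂ : LinearMap.range d₂ = LinearMap.ker d₃)
    [Module.Flat A (LinearMap.range d₂)] [Module.Flat A (LinearMap.range d₃)]
    (x : AdicCompletion I M) (hx : AdicCompletion.map I d₂ x = 0) :
    ∃ y, AdicCompletion.map I d₁ y = x := by
  obtain ⟨a, rfl⟩ := AdicCompletion.mk_surjective I M x
  have ha : ∀ n, d₂ (a n) ∈ (I ^ n • ⊤ : Submodule A N) := by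
    intro n
    have := congrArg (fun t => t.val n) hx
    simpa using this
  have hz : ∀ n, ∃ z : LinearMap.ker d₂, a n - z ∈ (I ^ n • ⊤ : Submodule A M) := by
    intro n
    let d' : M →ₗ[A] LinearMap.ker d₃ := d₂.codRestrict _ fun m => h₂ ▸ ⟨m, rfl⟩
    have hd' : LinearMap.range d' = ⊤ := by
      rw [LinearMap.range_eq_top]
      rintro ⟨w, hw⟩
      rw [← h₂] at hw
      obtain ⟨m, rfl⟩ := hw
      exact ⟨m, rfl⟩
    have h := aux_pure d₃ (I ^ n) (d' (a n)) (ha n)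
    rw [← hd', ← Submodule.map_top, ← Submodule.map_smul''] at h
    obtain ⟨m, hm, hm'⟩ := h
    have hm2 : d₂ m = d₂ (a n) := congrArg Subtype.val hm'
    exact ⟨⟨a n - m, by simp [hm2]⟩, by simpa using hm⟩
  choose z hz using hz
  let zs : AdicCompletion.AdicCauchySequence I (LinearMap.ker d₂) :=
    AdicCompletion.AdicCauchySequence.mk I _ z (by
      intro n
      rw [SModEq.sub_mem]
      apply aux_pure
      have e1 := hz n
      have e2 : a (n+1) - z (n+1) ∈ (I ^ n • ⊤ : Submodule A M) :=
        Submodule.smul_mono_left (Ideal.pow_le_pow_right (Nat.le_succ n)) (hz (n+1))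
      have e3 : a n - a (n+1) ∈ (I ^ n • ⊤ : Submodule A M) :=
        SModEq.sub_mem.1 (a.property (Nat.le_succ n))
      have := Submodule.add_mem _ (Submodule.sub_mem _ e3 e1) e2
      convert this using 1
      simp only [AddSubgroupClass.coe_sub]
      abel)
  let d'' : L →ₗ[A] LinearMap.ker d₂ := d₁.codRestrict _ fun m => h₁ ▸ ⟨m, rfl⟩
  have hd'' : Function.Surjective d'' := by
    rintro ⟨w, hw⟩
    rw [← h₁] at hw
    obtain ⟨m, rfl⟩ := hw
    exact ⟨m, rfl⟩
  obtain ⟨y, hy⟩ := AdicCompletion.map_surjective I hd'' (AdicCompletion.mk I _ zs)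
  refine ⟨y, ?_⟩
  have : d₁ = (LinearMap.ker d₂).subtype ∘ₗ d'' := rfl
  rw [this, ← AdicCompletion.map_comp_apply, hy, AdicCompletion.map_mk]
  ext n
  simp only [AdicCompletion.mk_apply_coe, Submodule.mkQ_apply]
  refine ((Submodule.Quotient.eq _).2 (hz n)).symm

theorem aux_acyclic_iff {C : Type*} [Category C] [Abelian C] {P Q : CochainComplex C ℤ}
    (f : P ⟶ Q) : QuasiIso f ↔ (CochainComplex.mappingCone f).Acyclic := by
  rw [← HomotopyCategory.quotient_obj_mem_subcategoryAcyclic_iff_acyclic,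
    ← HomologicalComplex.mem_quasiIso_iff, ← HomotopyCategory.quotient_map_mem_quasiIso_iff,
    HomotopyCategory.quasiIso_eq_trW_subcategoryAcyclic]
  exact ObjectProperty.trW_iff_of_distinguished _ _
    (HomotopyCategory.mappingCone_triangleh_distinguished f)

end helpers

instance (A : Type) [CommRing A] (I : Ideal A) : (adicCompletionFunctor A I).Additive where
  map_add {M N f g} := by
    refine ModuleCat.hom_ext (LinearMap.ext fun x => ?_)
    obtain ⟨a, rfl⟩ := AdicCompletion.mk_surjective I _ x
    refine AdicCompletion.ext fun n => ?_
    rfl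

theorem aux_complex (A : Type) [CommRing A] (I : Ideal A)
    (C : CochainComplex (ModuleCat A) ℤ) (n : ℤ) (hn : ∀ i : ℤ, n < i → Limits.IsZero (C.X i))
    (hflat : ∀ i : ℤ, Module.Flat A (C.X i)) (hC : C.Acyclic) :
    (((adicCompletionFunctor A I).mapHomologicalComplex (ComplexShape.up ℤ)).obj C).Acyclic := by
  have hex : ∀ i j k : ℤ, i + 1 = j → j + 1 = k →
      LinearMap.range (C.d i j).hom = LinearMap.ker (C.d j k).hom := by
    intro i j k hij hjk
    have := (C.exactAt_iff' i j k (by simp [← hij]) (by simp [hjk])).1 (hC j)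
    exact this.moduleCat_range_eq_ker
  have hfl : ∀ (m : ℕ) (i j : ℤ), n - m < i → i + 1 = j →
      Module.Flat A (LinearMap.range (C.d i j).hom) := by
    intro m
    induction m with
    | zero =>
      intro i j hi hij
      have : Subsingleton (C.X j) := ModuleCat.subsingleton_of_isZero (hn j (by grind))
      infer_instance
    | succ m ih =>
      intro i j hi hij
      have := ih j (j + 1) (by grind) rfl
      rw [hex i j (j + 1) hij rfl]
      exact aux_flat_ker _
  have hfl' : ∀ i j : ℤ, i + 1 = j → Module.Flat A (LinearMap.range (C.d i j).hom) :=
    fun i j h => hfl (n - i + 1).toNat i j (by grind) h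
  intro j
  rw [HomologicalComplex.exactAt_iff' _ (j - 1) j (j + 1) (by simp) (by simp),
    ShortComplex.moduleCat_exact_iff]
  intro x hx
  have := hfl' j (j + 1) rfl
  have := hfl' (j + 1) (j + 1 + 1) rfl
  exact aux_exact I (C.d (j - 1) j).hom (C.d j (j + 1)).hom (C.d (j + 1) (j + 1 + 1)).hom
    (hex _ _ _ (by simp) rfl) (hex _ _ _ rfl rfl) x hx

theorem aux_flat_cone (A : Type) [CommRing A]
    {P Q : CochainComplex (ModuleCat A) ℤ}
    (hflatP : ∀ i : ℤ, Module.Flat A (P.X i))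
    (hflatQ : ∀ i : ℤ, Module.Flat A (Q.X i))
    (f : P ⟶ Q) (i : ℤ) : Module.Flat A ((CochainComplex.mappingCone f).X i) := by
  let e := (HomologicalComplex.homotopyCofiber.XIsoBiprod f i (i + 1) rfl ≪≫
    ModuleCat.biprodIsoProd _ _).toLinearEquiv
  have := hflatP (i + 1)
  have := hflatQ i
  have : Module.Flat A (P.X (i + 1) × Q.X i) := aux_flat_prod _ _
  exact Module.Flat.of_linearEquiv e

/-- If `f : P ⟶ Q` is a quasi-isomorphism between bounded-above cochain complexes of flat
modules over a noetherian commutative ring `A`, then the induced map between the degreewise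
`I`-adic completions is again a quasi-isomorphism. -/
theorem stmt1 (A : Type) [CommRing A] [IsNoetherianRing A] (I : Ideal A)
    (P Q : CochainComplex (ModuleCat A) ℤ)
    (hbddP : ∃ n : ℤ, ∀ i : ℤ, n < i → Limits.IsZero (P.X i))
    (hbddQ : ∃ n : ℤ, ∀ i : ℤ, n < i → Limits.IsZero (Q.X i))
    (hflatP : ∀ i : ℤ, Module.Flat A (P.X i))
    (hflatQ : ∀ i : ℤ, Module.Flat A (Q.X i))
    (f : P ⟶ Q) [QuasiIso f] :
    QuasiIso (((adicCompletionFunctor A I).mapHomologicalComplex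
      (ComplexShape.up ℤ)).map f) := by
  obtain ⟨n₁, h₁⟩ := hbddP
  obtain ⟨n₂, h₂⟩ := hbddQ
  rw [aux_acyclic_iff]
  have hC := aux_complex A I (CochainComplex.mappingCone f) (max n₁ n₂)
    (fun i hi => (CochainComplex.mappingCone.isZero_X_iff f i).2
      ⟨h₁ _ (by grind), h₂ _ (by grind)⟩)
    (aux_flat_cone A hflatP hflatQ f) ((aux_acyclic_iff f).1 inferInstance)
  intro j
  exact (hC j).of_iso
    (CochainComplex.mappingCone.mapHomologicalComplexIso f (adicCompletionFunctor A I))
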